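/- Let i ≥ 1 and l₁ ≥ 1 be natural numbers and let (a_j)_{j∈ℕ} be nonnegative real numbers with Σ_{j=l₁}^∞ j^{i+1} a_j < ∞. Set S := Σ_{l=l₁}^∞ Σ_{j=l}^∞ (j−l+1)·l^{i−1}·a_j. Then S is finite and satisfies the two-sided bound: Σ_{j=l₁}^∞ [ (j^i − l₁^i)(j+1)/i − ((j+1)^{i+1} − (l₁−1)^{i+1})/(i+1) ]·a_j ≤ S ≤ Σ_{j=l₁}^∞ [ ((j+1)^{i+1} − (l₁−1)^{i+1})/i − (j^{i+1} − l₁^{i+1})/(i+1) ]·a_j. -/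

import Mathlib

/-!
Common setup: the Fourier–Plancherel transform on `L²(ℝ³;ℂ)` (Mathlib's unitary
Fourier transform with kernel `e^{-2πi x·ξ}`), characterized -- uniquely up to a.e.
equality -- by the multiplication formula against Schwartz functions; sharp
frequency cut-offs; Besov norms; and the notion of Leray–Hopf weak solution.
-/

noncomputable section

open MeasureTheory Real Complex Filter Function
open scoped ENNReal NNReal FourierTransform ComplexConjugate Classical

namespace NSE

abbrev V := EuclideanSpace ℝ (Fin 3)

/-- `IsFourierPair u v` says: `u, v ∈ L²(ℝ³;ℂ)` and `v` is (a version of) the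
Fourier–Plancherel transform `𝓕u` of `u` (unitary Fourier transform, kernel
`e^{-2πi x·ξ}`), characterized by the multiplication formula
`∫ v g = ∫ u 𝓕g` for all Schwartz functions `g`. -/
def IsFourierPair (u v : V → ℂ) : Prop :=
  MemLp u 2 volume ∧ MemLp v 2 volume ∧
    ∀ g : SchwartzMap V ℂ,
      ∫ ξ, v ξ * g ξ = ∫ x, u x * 𝓕 (⇑g) x

/-- The Fourier–Plancherel transform `𝓕u` of `u ∈ L²` (a choice of representative;
`0` if `u ∉ L²`). -/
def FT (u : V → ℂ) : V → ℂ :=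
  if h : ∃ v, IsFourierPair u v then h.choose else 0

/-- The inverse Fourier–Plancherel transform `𝓕⁻¹v` of `v ∈ L²` (a choice of
representative; `0` if `v ∉ L²`). -/
def FTinv (v : V → ℂ) : V → ℂ :=
  if h : ∃ u, IsFourierPair u v then h.choose else 0

/-- Frequency cut-off: `𝓕⁻¹(1_S · 𝓕u)`. -/
def cut (S : Set V) (u : V → ℂ) : V → ℂ := FTinv (S.indicator (FT u))

/-- High-frequency part `u^k = 𝓕⁻¹(1_{|ξ|≥k} 𝓕u)`. -/
def hi (k : ℝ) (u : V → ℂ) : V → ℂ := cut {ξ : V | k ≤ ‖ξ‖} u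

/-- Low-frequency part `u_k = 𝓕⁻¹(1_{|ξ|<k} 𝓕u)`. -/
def lo (k : ℝ) (u : V → ℂ) : V → ℂ := cut {ξ : V | ‖ξ‖ < k} u

/-- Frequency band `u_{h,k} = 𝓕⁻¹(1_{h≤|ξ|<k} 𝓕u)`. -/
def band (h k : ℝ) (u : V → ℂ) : V → ℂ := cut {ξ : V | h ≤ ‖ξ‖ ∧ ‖ξ‖ < k} u

/-- Sharp dyadic piece `Δ_j v = 𝓕⁻¹(1_{2^{j-1}≤|ξ|<2^j} 𝓕v)`. -/
def Δd (j : ℤ) (v : V → ℂ) : V → ℂ := band ((2:ℝ) ^ (j - 1)) ((2:ℝ) ^ j) v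

/-- `Δ̃₀ v = 𝓕⁻¹(1_{|ξ|<1} 𝓕v)`. -/
def Δt0 (v : V → ℂ) : V → ℂ := lo 1 v

/-- The `L^∞` norm (essential sup norm; for the frequency-localized pieces this is
the sup norm of the bounded continuous representative), valued in `[0,∞]`. -/
def nInf (v : V → ℂ) : ℝ≥0∞ := eLpNorm v ⊤ volume

/-- Inhomogeneous Besov norm `‖v‖_{B^σ_{∞,∞}}`, valued in `[0,∞]`. -/
def besov (σ : ℝ) (v : V → ℂ) : ℝ≥0∞ :=
  max (nInf (Δt0 v))
    (⨆ j : {j : ℕ // 1 ≤ j}, ENNReal.ofReal ((2:ℝ) ^ (σ * (j : ℕ))) * nInf (Δd ((j : ℕ) : ℤ) v))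

/-- Homogeneous Besov norm `‖v‖_{Ḃ^{-1}_{∞,∞}} = sup_{j∈ℤ} 2^{-j} ‖Δ_j v‖_∞`,
valued in `[0,∞]`. -/
def hbesovNeg1 (v : V → ℂ) : ℝ≥0∞ :=
  ⨆ j : ℤ, ENNReal.ofReal ((2:ℝ) ^ (-(j : ℝ))) * nInf (Δd j v)

/-- `i`-th component of a vector field, as a complex-valued function. -/
def comp (w : V → V) (i : Fin 3) : V → ℂ := fun x => ((w x i : ℝ) : ℂ)

/-- `|𝓕w(ξ)|²` (sum over the three components), valued in `[0,∞]`. -/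
def frSq (w : V → V) (ξ : V) : ℝ≥0∞ := ∑ i : Fin 3, (‖FT (comp w i) ξ‖₊ : ℝ≥0∞) ^ 2

/-- `∫ |ξ|² |𝓕w(ξ)|² dξ`. -/
def gradSq (w : V → V) : ℝ≥0∞ := ∫⁻ ξ, (‖ξ‖₊ : ℝ≥0∞) ^ 2 * frSq w ξ

/-- `‖∇w‖_{L²}² = ∫ 4π²|ξ|²|𝓕w(ξ)|² dξ`. -/
def gradSq4π (w : V → V) : ℝ≥0∞ :=
  ∫⁻ ξ, ENNReal.ofReal (4 * π ^ 2) * (‖ξ‖₊ : ℝ≥0∞) ^ 2 * frSq w ξ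

/-- `∫ (1+|ξ|²) |𝓕w(ξ)|² dξ` (squared `H¹` norm). -/
def h1Sq (w : V → V) : ℝ≥0∞ := ∫⁻ ξ, (1 + (‖ξ‖₊ : ℝ≥0∞) ^ 2) * frSq w ξ

/-- `∫ (1+|ξ|²)² |𝓕w(ξ)|² dξ` (squared `H²` norm). -/
def h2Sq (w : V → V) : ℝ≥0∞ := ∫⁻ ξ, (1 + (‖ξ‖₊ : ℝ≥0∞) ^ 2) ^ 2 * frSq w ξ

/-- Divergence-free on the Fourier side: `𝓕w(ξ)·ξ = 0` for a.e. `ξ`. -/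
def DivFreeF (w : V → V) : Prop :=
  ∀ᵐ ξ : V, (∑ i : Fin 3, FT (comp w i) ξ * ((ξ i : ℝ) : ℂ)) = 0

/-- Partial derivative `∂_i f (x)` of a scalar field. -/
def pd (f : V → ℝ) (i : Fin 3) (x : V) : ℝ :=
  fderiv ℝ f x (EuclideanSpace.single i (1:ℝ))

/-- A Leray–Hopf weak solution of the 3D Navier–Stokes equations on `(0,∞)×ℝ³`
with viscosity `ν` and divergence-free initial datum `u₀ ∈ L²(ℝ³;ℝ³)`. -/
structure IsLerayHopf (ν : ℝ) (u₀ : V → V) (u : ℝ → V → V) : Prop where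
  /-- measurability of `u` -/
  meas : Measurable (Function.uncurry u)
  /-- `u(t) ∈ L²` for `t > 0` -/
  memL2 : ∀ t : ℝ, 0 < t → MemLp (u t) 2 volume
  /-- (i) `ess sup_{t>0} ‖u(t)‖_{L²} < ∞` -/
  bddL2 : essSup (fun t => eLpNorm (u t) 2 volume) (volume.restrict (Set.Ioi (0:ℝ))) < ⊤
  /-- (i) `∫₀^∞ ∫ |ξ|²|𝓕u(t)(ξ)|² dξ dt < ∞` -/
  gradL2 : (∫⁻ t in Set.Ioi (0:ℝ), gradSq (u t)) < ⊤
  /-- (ii) `u(t)` is divergence-free for a.e. `t` -/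
  divFree : ∀ᵐ t ∂(volume.restrict (Set.Ioi (0:ℝ))), DivFreeF (u t)
  /-- (iii) the weak formulation against smooth compactly supported
  divergence-free test fields -/
  weak : ∀ φ : ℝ → V → V, ContDiff ℝ (⊤ : ℕ∞) (Function.uncurry φ) →
      HasCompactSupport (Function.uncurry φ) →
      (∀ t x, (∑ i : Fin 3, pd (fun y => φ t y i) i x) = 0) →
      (∫ t in Set.Ioi (0:ℝ), ∫ x,
          ((∑ j : Fin 3, u t x j * deriv (fun s => φ s x j) t)
            + ν * (∑ j : Fin 3, u t x j *
                ∑ i : Fin 3, pd (fun y => pd (fun z => φ t z j) i y) i x)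
            + ∑ i : Fin 3, ∑ j : Fin 3, u t x i * u t x j * pd (fun y => φ t y j) i x))
        + (∫ x, ∑ j : Fin 3, u₀ x j * φ 0 x j) = 0
  /-- (iv) the energy inequality for a.e. `t > 0` -/
  energy : ∀ᵐ t ∂(volume.restrict (Set.Ioi (0:ℝ))),
      (1/2 : ℝ≥0∞) * eLpNorm (u t) 2 volume ^ 2
          + ENNReal.ofReal ν * ∫⁻ τ in Set.Ioc (0:ℝ) t, gradSq4π (u τ)
        ≤ (1/2 : ℝ≥0∞) * eLpNorm u₀ 2 volume ^ 2

/-- `u` is regular in `(0,T]`: `u ∈ L^∞(0,T;H¹) ∩ L²(0,T;H²)`. -/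
def RegularOn (u : ℝ → V → V) (T : ℝ) : Prop :=
  essSup (fun t => h1Sq (u t)) (volume.restrict (Set.Ioo (0:ℝ) T)) < ⊤ ∧
    (∫⁻ t in Set.Ioo (0:ℝ) T, h2Sq (u t)) < ⊤

/-- Besov norm of a vector field: the largest Besov norm of its components. -/
def besovV (σ : ℝ) (w : V → V) : ℝ≥0∞ := ⨆ i : Fin 3, besov σ (comp w i)

lemma aux_lo (x : ℝ) (hx : 0 ≤ x) (k : ℕ) :
    x ^ (k+1) + (k+1) * x ^ k ≤ (x+1) ^ (k+1) := by
  induction k with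
  | zero => simp
  | succ k ih =>
    have h : 0 ≤ x ^ k := by positivity
    have h2 := mul_le_mul_of_nonneg_left ih (by linarith : 0 ≤ x + 1)
    have h3 : 0 ≤ ((k:ℝ)+1) * x ^ k := by positivity
    have e : (x+1) ^ (k+1+1) = (x+1) * (x+1)^(k+1) := by ring
    rw [e]; refine le_trans ?_ h2
    push_cast
    have : (x + 1) * (x ^ (k + 1) + (k + 1) * x ^ k)
      = x ^ (k+1+1) + ((k:ℝ)+1+1) * x^(k+1) + ((k:ℝ)+1) * x ^ k := by ring
    linarith

lemma aux_up (x : ℝ) (hx : 0 ≤ x) (k : ℕ) :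
    (x+1) ^ (k+1) ≤ x ^ (k+1) + (k+1) * (x+1) ^ k := by
  induction k with
  | zero => simp
  | succ k ih =>
    have h : 0 ≤ (x+1) ^ k := by positivity
    have h2 := mul_le_mul_of_nonneg_left ih hx
    have h3 : 0 ≤ ((k:ℝ)+1) * (x+1) ^ k := by positivity
    push_cast
    have e : (x+1) ^ (k+1+1) = x * (x+1)^(k+1) + (x+1)^(k+1) := by ring
    have e2 : ((k:ℝ)+1+1) * (x+1)^(k+1)
      = x * ((k+1) * (x+1)^k) + (k+1) * (x+1)^k + (x+1)^(k+1) := by ring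
    have e3 : x * (x ^ (k + 1) + (k + 1) * (x + 1) ^ k)
      = x ^ (k+1+1) + x * ((k+1) * (x+1)^k) := by ring
    linarith

lemma sum_up (L : ℝ) (hL : 1 ≤ L) (k n : ℕ) :
    (k+1) * ∑ p ∈ Finset.range (n+1), (L + p) ^ k ≤ (L + n + 1) ^ (k+1) - L ^ (k+1) := by
  induction n with
  | zero => have := aux_lo L (by linarith) k; simp; linarith
  | succ n ih =>
    rw [Finset.sum_range_succ, mul_add]
    have := aux_lo (L + (n+1:ℕ)) (by positivity) k
    push_cast at this ⊢
    rw [← add_assoc] at this ⊢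
    linarith

lemma sum_lo (L : ℝ) (hL : 1 ≤ L) (k n : ℕ) :
    (L + n) ^ (k+1) - (L-1) ^ (k+1) ≤ (k+1) * ∑ p ∈ Finset.range (n+1), (L + p) ^ k := by
  induction n with
  | zero => have := aux_up (L-1) (by linarith) k; simp at this ⊢; linarith
  | succ n ih =>
    rw [Finset.sum_range_succ, mul_add]
    have := aux_up (L + n) (by positivity) k
    push_cast at this ⊢
    rw [← add_assoc]
    linarith

/-- The coefficient of `a (l₁ + n)` after exchanging the sums. -/
def coefC (k : ℕ) (L : ℝ) (n : ℕ) : ℝ :=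
  ∑ p ∈ Finset.HasAntidiagonal.antidiagonal n, ((p.2 : ℝ) + 1) * (L + p.1) ^ k

lemma coefC_eq (k : ℕ) (L : ℝ) (n : ℕ) :
    coefC k L n = (L + n + 1) * ∑ p ∈ Finset.range (n+1), (L + p) ^ k
      - ∑ p ∈ Finset.range (n+1), (L + p) ^ (k+1) := by
  unfold coefC
  rw [Finset.Nat.sum_antidiagonal_eq_sum_range_succ_mk, Finset.mul_sum, ← Finset.sum_sub_distrib]
  refine Finset.sum_congr rfl fun p hp => ?_
  have : p ≤ n := by simpa [Nat.lt_succ_iff] using hp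
  push_cast [Nat.cast_sub this]
  ring

lemma coefC_nonneg (k : ℕ) (L : ℝ) (hL : 1 ≤ L) (n : ℕ) : 0 ≤ coefC k L n :=
  Finset.sum_nonneg fun p _ => by positivity

lemma coefC_le (k : ℕ) (L : ℝ) (hL : 1 ≤ L) (n : ℕ) : coefC k L n ≤ (L + n) ^ (k+2) := by
  have h : ∀ p ∈ Finset.HasAntidiagonal.antidiagonal n, ((p.2 : ℝ) + 1) * (L + p.1) ^ k
      ≤ (L + n) * (L + n) ^ k := by
    intro p hp
    have hp : p.1 + p.2 = n := by simpa using hp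
    have hp' : (p.1:ℝ) + p.2 = n := by exact_mod_cast hp
    have h1 : (0:ℝ) ≤ p.1 := by positivity
    have h2 : (0:ℝ) ≤ p.2 := by positivity
    have h3 : L + p.1 ≤ L + n := by linarith
    exact mul_le_mul (by linarith) (pow_le_pow_left₀ (by linarith) h3 k) (by positivity)
      (by positivity)
  refine (Finset.sum_le_card_nsmul _ _ _ h).trans ?_
  rw [Finset.Nat.card_antidiagonal, nsmul_eq_mul, pow_add, pow_two]
  push_cast
  have : (0:ℝ) ≤ (L+n)*(L+n)^k := by positivity
  nlinarith [mul_nonneg this (sub_nonneg.2 hL)]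

lemma coefC_upper (k : ℕ) (L : ℝ) (hL : 1 ≤ L) (n : ℕ) :
    coefC k L n ≤ ((L + n + 1) ^ (k+2) - (L - 1) ^ (k+2)) / (k+1)
      - ((L + n) ^ (k+2) - L ^ (k+2)) / (k+2) := by
  have h1 := sum_up L hL k n
  have h2 := sum_lo L hL (k+1) n
  rw [coefC_eq]
  set A := ∑ p ∈ Finset.range (n+1), (L + p) ^ k
  set B := ∑ p ∈ Finset.range (n+1), (L + p) ^ (k+1)
  have hA : A ≤ ((L + n + 1) ^ (k+1) - L ^ (k+1)) / (k+1) := by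
    rw [le_div_iff₀ (by positivity)]; linarith
  have hB : ((L + n) ^ (k+2) - (L-1) ^ (k+2)) / (k+2) ≤ B := by
    rw [div_le_iff₀ (by positivity)]; push_cast at h2; ring_nf at h2 ⊢; linarith
  have hA' := mul_le_mul_of_nonneg_left hA (by positivity : 0 ≤ L + n + 1)
  have m0 : 0 ≤ L - 1 := by linarith
  have hm : (L-1)^(k+2) ≤ L^(k+2) := by gcongr; linarith
  have hm2 : (L-1)^(k+2) ≤ (L+n+1) * L^(k+1) := by
    have : (0:ℝ) ≤ (n+1) * L^(k+1) := by positivity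
    have e : L^(k+2) = L * L^(k+1) := by ring
    nlinarith
  have hm' : (L-1)^(k+2) / (k+2) ≤ L^(k+2) / (k+2) := by gcongr
  have hm2' : (L-1)^(k+2) / (k+1) ≤ (L+n+1) * L^(k+1) / (k+1) := by gcongr
  have e : (L + n + 1) * (((L + n + 1) ^ (k+1) - L ^ (k+1)) / (k+1))
    = (L+n+1)^(k+2) / (k+1) - (L+n+1) * L^(k+1) / (k+1) := by ring
  rw [e] at hA'
  rw [sub_div] at hB ⊢
  rw [sub_div]
  linarith

lemma coefC_lower (k : ℕ) (L : ℝ) (hL : 1 ≤ L) (n : ℕ) :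
    ((L + n) ^ (k+1) - L ^ (k+1)) * (L + n + 1) / (k+1)
      - ((L + n + 1) ^ (k+2) - (L-1) ^ (k+2)) / (k+2) ≤ coefC k L n := by
  have h1 := sum_lo L hL k n
  have h2 := sum_up L hL (k+1) n
  rw [coefC_eq]
  set A := ∑ p ∈ Finset.range (n+1), (L + p) ^ k
  set B := ∑ p ∈ Finset.range (n+1), (L + p) ^ (k+1)
  have m0 : 0 ≤ L - 1 := by linarith
  have hm : (L-1)^(k+2) ≤ L^(k+2) := by gcongr; linarith
  have hm2 : (L-1)^(k+1) ≤ L^(k+1) := by gcongr; linarith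
  have hA : ((L + n) ^ (k+1) - L ^ (k+1)) / (k+1) ≤ A := by
    rw [div_le_iff₀ (by positivity)]; linarith
  have hB : B ≤ ((L + n + 1) ^ (k+2) - (L-1) ^ (k+2)) / (k+2) := by
    rw [le_div_iff₀ (by positivity)]; push_cast at h2
    have : B * (k+2) = (k+1+1) * B := by ring
    rw [this]
    have : k + 1 + 1 = k + 2 := rfl
    rw [this] at h2
    linarith
  have hA' := mul_le_mul_of_nonneg_left hA (by positivity : 0 ≤ L + n + 1)
  have e : ((L + n) ^ (k+1) - L ^ (k+1)) * (L + n + 1) / (k+1)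
    = (L + n + 1) * (((L + n) ^ (k+1) - L ^ (k+1)) / (k+1)) := by ring
  rw [e]
  linarith

/-- Two-sided bound for the weighted double sum
`S = Σ_{l≥l₁} Σ_{j≥l} (j-l+1) l^{i-1} a_j` of a nonnegative sequence with
`Σ_{j≥l₁} j^{i+1} a_j < ∞`. -/
theorem double_sum_superposition_bounds (i l₁ : ℕ) (hi1 : 1 ≤ i) (hl1 : 1 ≤ l₁)
    (a : ℕ → ℝ) (ha : ∀ j, 0 ≤ a j)
    (hsum : Summable (fun n : ℕ => ((l₁ + n : ℕ) : ℝ) ^ (i + 1) * a (l₁ + n))) :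
    Summable (fun p : ℕ × ℕ =>
        (((p.2 : ℝ) + 1) * ((l₁ + p.1 : ℕ) : ℝ) ^ (i - 1)) * a (l₁ + p.1 + p.2)) ∧
      (∑' n : ℕ, ((((l₁ + n : ℕ) : ℝ) ^ i - (l₁ : ℝ) ^ i) * (((l₁ + n : ℕ) : ℝ) + 1) / i
            - ((((l₁ + n : ℕ) : ℝ) + 1) ^ (i + 1) - ((l₁ : ℝ) - 1) ^ (i + 1)) / (i + 1))
          * a (l₁ + n))
        ≤ (∑' p : ℕ × ℕ,
            (((p.2 : ℝ) + 1) * ((l₁ + p.1 : ℕ) : ℝ) ^ (i - 1)) * a (l₁ + p.1 + p.2)) ∧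
      (∑' p : ℕ × ℕ,
          (((p.2 : ℝ) + 1) * ((l₁ + p.1 : ℕ) : ℝ) ^ (i - 1)) * a (l₁ + p.1 + p.2))
        ≤ ∑' n : ℕ, (((((l₁ + n : ℕ) : ℝ) + 1) ^ (i + 1) - ((l₁ : ℝ) - 1) ^ (i + 1)) / i
            - (((l₁ + n : ℕ) : ℝ) ^ (i + 1) - (l₁ : ℝ) ^ (i + 1)) / (i + 1)) * a (l₁ + n) := by
  obtain ⟨k, rfl⟩ : ∃ k, i = k + 1 := ⟨i - 1, by omega⟩
  have hL : (1:ℝ) ≤ (l₁:ℝ) := by exact_mod_cast hl1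
  simp only [Nat.add_sub_cancel]
  push_cast at hsum ⊢
  have e2 : (k:ℝ) + 1 + 1 = k + 2 := by ring
  rw [e2]
  change Summable (fun n : ℕ => ((l₁:ℝ) + n) ^ (k + 2) * a (l₁ + n)) at hsum
  set L : ℝ := (l₁ : ℝ) with hLdef
  set f : ℕ × ℕ → ℝ := fun p => (((p.2 : ℝ) + 1) * (L + p.1) ^ k) * a (l₁ + p.1 + p.2) with hf
  have hf0 : ∀ p, 0 ≤ f p := fun p => mul_nonneg (by positivity) (ha _)
  have hC : Summable (fun n : ℕ => coefC k L n * a (l₁ + n)) :=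
    Summable.of_nonneg_of_le (fun n => mul_nonneg (coefC_nonneg k L hL n) (ha _))
      (fun n => mul_le_mul_of_nonneg_right (coefC_le k L hL n) (ha _)) hsum
  have hfib : ∀ n : ℕ, ∑ p ∈ Finset.HasAntidiagonal.antidiagonal n, f p = coefC k L n * a (l₁ + n) := by
    intro n
    rw [coefC, Finset.sum_mul]
    refine Finset.sum_congr rfl fun p hp => ?_
    have hp : p.1 + p.2 = n := by simpa using hp
    simp only [hf]
    rw [add_assoc l₁, hp]
  let E := Finset.HasAntidiagonal.sigmaAntidiagonalEquivProd (A := ℕ)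
  have hfib' : ∀ n : ℕ, ∑' p : Finset.HasAntidiagonal.antidiagonal n, f (E ⟨n, p⟩)
      = coefC k L n * a (l₁ + n) := by
    intro n
    rw [← hfib n, tsum_fintype]
    exact Finset.sum_coe_sort (Finset.HasAntidiagonal.antidiagonal n) f
  have hsE : Summable (f ∘ E) := by
    refine (summable_sigma_of_nonneg (f := f ∘ E) (fun x => hf0 _)).2 ⟨fun n => (hasSum_fintype _).summable, ?_⟩
    refine hC.congr fun n => ?_
    exact (hfib' n).symm
  have hS : Summable f := E.summable_iff.1 hsE
  have hT : ∑' p, f p = ∑' n, coefC k L n * a (l₁ + n) := by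
    rw [← E.tsum_eq f]
    change ∑' c, (f ∘ E) c = _
    rw [Summable.tsum_sigma' (fun n => (hasSum_fintype _).summable) hsE]
    exact tsum_congr hfib'
  -- summability of the bounding series
  have g1 : Summable (fun n : ℕ => (L + n + 1) ^ (k+2) * a (l₁ + n)) := by
    refine Summable.of_nonneg_of_le (fun n => mul_nonneg (by positivity) (ha _)) (fun n => ?_)
      (hsum.mul_left ((2:ℝ) ^ (k+2)))
    rw [← mul_assoc, ← mul_pow]
    have : (0:ℝ) ≤ n := by positivity
    refine mul_le_mul_of_nonneg_right ?_ (ha _)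
    gcongr
    linarith
  have g0 : Summable (fun n : ℕ => a (l₁ + n)) := by
    refine Summable.of_nonneg_of_le (fun n => ha _) (fun n => ?_) hsum
    have : (0:ℝ) ≤ n := by positivity
    exact le_mul_of_one_le_left (ha _) (one_le_pow₀ (by linarith))
  have g2 : Summable (fun n : ℕ => (L + n) ^ (k+1) * (L + n + 1) * a (l₁ + n)) := by
    refine Summable.of_nonneg_of_le (fun n => mul_nonneg (by positivity) (ha _)) (fun n => ?_) g1
    refine mul_le_mul_of_nonneg_right ?_ (ha _)
    rw [pow_succ (L + n + 1) (k+1)]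
    exact mul_le_mul_of_nonneg_right (pow_le_pow_left₀ (by positivity) (by linarith) _)
      (by positivity)
  have g3 : Summable (fun n : ℕ => (L + n + 1) * a (l₁ + n)) := by
    refine Summable.of_nonneg_of_le (fun n => mul_nonneg (by positivity) (ha _)) (fun n => ?_) g1
    have : (0:ℝ) ≤ n := by positivity
    refine mul_le_mul_of_nonneg_right ?_ (ha _)
    exact le_self_pow₀ (by linarith) (by omega)
  refine ⟨hS, ?_, ?_⟩
  · change _ ≤ ∑' p, f p
    rw [hT]
    refine Summable.tsum_le_tsum
      (fun n => mul_le_mul_of_nonneg_right (coefC_lower k L hL n) (ha _)) ?_ hC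
    refine ((((g2.mul_left (1 / ((k:ℝ)+1))).sub (g3.mul_left (L^(k+1) / ((k:ℝ)+1)))).sub
      (g1.mul_left (1 / ((k:ℝ)+2)))).add (g0.mul_left ((L-1)^(k+2) / ((k:ℝ)+2)))).congr ?_
    intro n; ring
  · change ∑' p, f p ≤ _
    rw [hT]
    refine Summable.tsum_le_tsum
      (fun n => mul_le_mul_of_nonneg_right (coefC_upper k L hL n) (ha _)) hC ?_
    refine ((((g1.mul_left (1 / ((k:ℝ)+1))).sub (g0.mul_left ((L-1)^(k+2) / ((k:ℝ)+1)))).sub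
      (hsum.mul_left (1 / ((k:ℝ)+2)))).add (g0.mul_left (L^(k+2) / ((k:ℝ)+2)))).congr ?_
    intro n; ring

end NSE
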